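/- Let f ∈ ℂ[x_1,…,x_n]_d be sufficiently generic, K_d(f) the associated order-d Kalman matrix, Δ the discriminant of the characteristic polynomial of A, and Δ_d the discriminant of the characteristic polynomial of ρ_d(A), both viewed as polynomials in the entries of A. Then every irreducible factor of Δ_d is either a factor of det K_d(f) or a factor of Δ, and in this way one obtains exactly all irreducible factors of det K_d(f) that do not depend on f. Moreover, the irreducible factors of Δ divide Δ_d but do not divide det K_d(f). -/

import Mathlib

noncomputable section

/-! ## Zariski topology on complex affine space -/

/-- The Zariski topology on the affine space `ι → ℂ`: the basic open sets are the
complements of hypersurfaces. -/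
def zTop (ι : Type*) : TopologicalSpace (ι → ℂ) :=
  TopologicalSpace.generateFrom
    {U | ∃ p : MvPolynomial ι ℂ, U = {x | MvPolynomial.eval x p ≠ 0}}

/-- Zariski open subset of affine space. -/
def zOpen {ι : Type*} (U : Set (ι → ℂ)) : Prop := @IsOpen _ (zTop ι) U

/-- Zariski closed subset of affine space. -/
def zClosed {ι : Type*} (Z : Set (ι → ℂ)) : Prop := @IsClosed _ (zTop ι) Z

/-- Zariski density. -/
def zDense {ι : Type*} (S : Set (ι → ℂ)) : Prop := @Dense _ (zTop ι) S

/-- Zariski closure. -/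
def zClosure {ι : Type*} (S : Set (ι → ℂ)) : Set (ι → ℂ) := @closure _ (zTop ι) S

/-- Irreducibility in the Zariski topology. -/
def zIrred {ι : Type*} (S : Set (ι → ℂ)) : Prop := @IsIrreducible _ (zTop ι) S

/-- The dimension of a subset of affine space: the topological Krull dimension of the
subspace topology induced by the Zariski topology. -/
def zDim {ι : Type*} (S : Set (ι → ℂ)) : WithBot ℕ∞ :=
  @topologicalKrullDim S (TopologicalSpace.induced Subtype.val (zTop ι))

/-- The common zero set of a family of polynomials. -/
def vanishSet {ι : Type*} (S : Set (MvPolynomial ι ℂ)) : Set (ι → ℂ) :=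
  {x | ∀ p ∈ S, MvPolynomial.eval x p = 0}

/-- The ideal of all polynomials vanishing on a subset of affine space. -/
def vanishingIdealOf {ι : Type*} (X : Set (ι → ℂ)) : Ideal (MvPolynomial ι ℂ) where
  carrier := {p | ∀ x ∈ X, MvPolynomial.eval x p = 0}
  add_mem' := by
    intro a b ha hb x hx
    simp [ha x hx, hb x hx]
  zero_mem' := by
    intro x hx
    simp
  smul_mem' := by
    intro c p hp x hx
    simp [smul_eq_mul, hp x hx]

/-- A subset of `ι → ℂ` is a cone if it is stable under scalar multiplication. -/
def IsCone {ι : Type*} (X : Set (ι → ℂ)) : Prop :=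
  ∀ (c : ℂ) (v : ι → ℂ), v ∈ X → c • v ∈ X

/-- The affine-linear subspace cut out by `k` affine-linear equations whose coefficients are
recorded by `a` (the `none` coordinate records the constant term). -/
def affSlice {ι : Type*} [Fintype ι] {k : ℕ} (a : Fin k × Option ι → ℂ) : Set (ι → ℂ) :=
  {x | ∀ j : Fin k, a (j, none) + ∑ i : ι, a (j, some i) * x i = 0}

/-- `hasConeDegree C k δ` : the projective variety with affine cone `C ⊆ ℂ^ι` and projective
dimension `k` has degree `δ`, expressed by saying that a generic affine-linear slice of `C` of
codimension `k + 1` consists of exactly `δ` points. -/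
def hasConeDegree {ι : Type*} [Fintype ι] (C : Set (ι → ℂ)) (k δ : ℕ) : Prop :=
  ∃ U : Set (Fin (k + 1) × Option ι → ℂ), zOpen U ∧ zDense U ∧
    ∀ a ∈ U, (C ∩ affSlice a).ncard = δ

/-! ## Eigenvectors and the Kalman variety -/

/-- `v` is an eigenvector of the matrix `A`. -/
def IsEigenvector {n : ℕ} (A : Matrix (Fin n) (Fin n) ℂ) (v : Fin n → ℂ) : Prop :=
  v ≠ 0 ∧ ∃ lam : ℂ, A.mulVec v = lam • v

/-- The space of `n × n` complex matrices, presented as an affine space. -/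
abbrev MatSpace (n : ℕ) := Fin n × Fin n → ℂ

/-- The matrix corresponding to a point of `MatSpace n`. -/
def toMat {n : ℕ} (A : MatSpace n) : Matrix (Fin n) (Fin n) ℂ :=
  Matrix.of fun i j => A (i, j)

/-- The affine cone over the Kalman variety `𝒦(X)` of the projective variety whose affine
cone is `X`: all matrices having an eigenvector lying on `X`. -/
def kalmanCone {n : ℕ} (X : Set (Fin n → ℂ)) : Set (MatSpace n) :=
  {A | ∃ v ∈ X, IsEigenvector (toMat A) v}



/-! ## Symmetric powers of matrices and Kalman matrices -/

/-- Index set for the monomials of degree `d` in `n` variables. -/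
abbrev MonIdx (n d : ℕ) := Sym (Fin n) d

/-- The exponent vector of the monomial indexed by `σ`. -/
def monExp {n d : ℕ} (σ : MonIdx n d) : Fin n →₀ ℕ :=
  Multiset.toFinsupp (σ : Multiset (Fin n))

/-- The generic `n × n` matrix, whose entries are the variables of `ℂ[A]`. -/
def genMat (n : ℕ) : Matrix (Fin n) (Fin n) (MvPolynomial (Fin n × Fin n) ℂ) :=
  Matrix.of fun i j => MvPolynomial.X (i, j)

/-- The `d`-th symmetric power `ρ_d(A)` of a square matrix `A`, i.e. the matrix (in the basis of
monomials of degree `d`) of the induced action of `A` on forms of degree `d`: the entry at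
`(τ, σ)` is the coefficient of `x^σ` in `(A·x)^τ`. -/
def symPow {R : Type*} [CommRing R] {n : ℕ} (d : ℕ) (A : Matrix (Fin n) (Fin n) R) :
    Matrix (MonIdx n d) (MonIdx n d) R :=
  Matrix.of fun τ σ =>
    MvPolynomial.coeff (monExp σ)
      (∏ j : Fin n, (∑ k : Fin n, MvPolynomial.C (A j k) * MvPolynomial.X k) ^ (monExp τ j))

/-- The coefficient vector of a form of degree `d`. -/
def coeffVec {n : ℕ} (d : ℕ) (f : MvPolynomial (Fin n) ℂ) : MonIdx n d → ℂ :=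
  fun σ => MvPolynomial.coeff (monExp σ) f

/-- The form of degree `d` with coefficient vector `c`. -/
def polyOf {n d : ℕ} (c : MonIdx n d → ℂ) : MvPolynomial (Fin n) ℂ :=
  ∑ σ : MonIdx n d, MvPolynomial.monomial (monExp σ) (c σ)

/-- The rectangular Kalman matrix of order `d` associated with a `p × N` coefficient matrix `C`:
its rows are the rows of `C`, `C·ρ_d(A)`, ..., `C·ρ_d(A)^{t-1}` for the generic matrix `A`. -/
def kalmanMat {n d p : ℕ} (t : ℕ) (C : Matrix (Fin p) (MonIdx n d) ℂ) :
    Matrix (Fin t × Fin p) (MonIdx n d) (MvPolynomial (Fin n × Fin n) ℂ) :=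
  Matrix.of fun r τ =>
    ∑ κ : MonIdx n d, MvPolynomial.C (C r.2 κ) * ((symPow d (genMat n)) ^ (r.1 : ℕ)) κ τ

/-- The square Kalman matrix `K_d(f)` of a form `f` with coefficient vector `c`: the rows are
`C_f ρ_d(A)^i` for `i = 0, …, N - 1` (indexed by monomials through a fixed enumeration). -/
def kalmanSq {n : ℕ} (d : ℕ) (c : MonIdx n d → ℂ) :
    Matrix (MonIdx n d) (MonIdx n d) (MvPolynomial (Fin n × Fin n) ℂ) :=
  Matrix.of fun σ τ =>
    ∑ κ : MonIdx n d, MvPolynomial.C (c κ) *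
      ((symPow d (genMat n)) ^ ((Fintype.equivFin (MonIdx n d)) σ : ℕ)) κ τ

/-- The determinant of the square Kalman matrix of order `d`. -/
def kalmanDet {n : ℕ} (d : ℕ) (c : MonIdx n d → ℂ) : MvPolynomial (Fin n × Fin n) ℂ :=
  (kalmanSq d c).det

/-- The locus of matrices at which all maximal minors of a (rectangular) matrix of polynomials
in `ℂ[A]` vanish. -/
def maxMinorsZeroSet {n d : ℕ} {ridx : Type*}
    (M : Matrix ridx (MonIdx n d) (MvPolynomial (Fin n × Fin n) ℂ)) : Set (MatSpace n) :=
  {A | ∀ e : MonIdx n d → ridx, Function.Injective e →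
    MvPolynomial.eval A (Matrix.det (Matrix.of fun σ τ => M (e σ) τ)) = 0}



/-! ## Polarizations and μ-Kalman varieties -/

/-- Evaluation of the multihomogeneous polarization `f_μ` of `f` at a tuple of vectors
`v_1, …, v_s` (up to a nonzero rational normalization constant): the coefficient of `t^μ`
in `f(t_1 v_1 + ⋯ + t_s v_s)`. -/
def polarEval {n s : ℕ} (f : MvPolynomial (Fin n) ℂ) (μ : Fin s → ℕ)
    (v : Fin s → Fin n → ℂ) : ℂ :=
  MvPolynomial.coeff (Finsupp.equivFunOnFinite.symm μ)
    (MvPolynomial.eval₂ MvPolynomial.C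
      (fun k => ∑ i : Fin s, MvPolynomial.C (v i k) * MvPolynomial.X i) f)

/-- The affine cone over the `μ`-Kalman variety `𝒦_μ(f)`: the Zariski closure of the set of
matrices admitting linearly independent eigenvectors `v_1, …, v_s` with `f_μ(v_1, …, v_s) = 0`. -/
def muKalmanCone {n : ℕ} (f : MvPolynomial (Fin n) ℂ) {s : ℕ} (μ : Fin s → ℕ) :
    Set (MatSpace n) :=
  zClosure {A | ∃ v : Fin s → (Fin n → ℂ),
    (∀ i, IsEigenvector (toMat A) (v i)) ∧ LinearIndependent ℂ v ∧ polarEval f μ v = 0}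

/-- The parts of a partition of `d`, listed as a tuple. -/
def partTuple (d : ℕ) (μ : Nat.Partition d) : Fin (Multiset.card μ.parts) → ℕ :=
  fun i => μ.parts.toList.get (i.cast (Multiset.length_toList _).symm)

/-- The multiset of nonzero exponents of the monomial indexed by `σ`. -/
def expMultiset {n d : ℕ} (σ : Sym (Fin n) d) : Multiset ℕ :=
  Multiset.filter (fun e => e ≠ 0)
    (Multiset.map (fun i => Multiset.toFinsupp (σ : Multiset (Fin n)) i) Finset.univ.val)

/-! ## Tangent spaces, smooth points and singular loci -/

/-- The Zariski tangent space of `X ⊆ ℂ^ι` at `x`: the common kernel of the differentials at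
`x` of all polynomials vanishing on `X`. -/
def tangentSpace {ι : Type*} [Fintype ι] (X : Set (ι → ℂ)) (x : ι → ℂ) :
    Submodule ℂ (ι → ℂ) where
  carrier := {u | ∀ p : MvPolynomial ι ℂ, (∀ y ∈ X, MvPolynomial.eval y p = 0) →
      ∑ i : ι, u i * MvPolynomial.eval x (MvPolynomial.pderiv i p) = 0}
  add_mem' := by
    intro a b ha hb p hp
    have h1 := ha p hp
    have h2 := hb p hp
    simp only [Pi.add_apply, add_mul, Finset.sum_add_distrib, h1, h2, add_zero]
  zero_mem' := by
    intro p hp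
    simp
  smul_mem' := by
    intro c u hu p hp
    have h1 := hu p hp
    simp only [Pi.smul_apply, smul_eq_mul, mul_assoc, ← Finset.mul_sum, h1, mul_zero]

/-- The local dimension of `X` at `x`, in the Zariski topology. -/
def zLocalDim {ι : Type*} (X : Set (ι → ℂ)) (x : ι → ℂ) : WithBot ℕ∞ :=
  ⨅ (U : Set (ι → ℂ)) (_ : zOpen U) (_ : x ∈ U), zDim (X ∩ U)

/-- `x` is a smooth point of `X`: the Zariski tangent space has dimension equal to the local
dimension of `X` at `x`. -/
def smoothAt {ι : Type*} [Fintype ι] (X : Set (ι → ℂ)) (x : ι → ℂ) : Prop :=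
  ((Module.finrank ℂ (tangentSpace X x) : ℕ∞) : WithBot ℕ∞) = zLocalDim X x

/-- The affine cone over the singular locus of the projective variety whose affine cone is `X`:
the nonzero points of `X` that are not smooth points. -/
def projSingCone {ι : Type*} [Fintype ι] (X : Set (ι → ℂ)) : Set (ι → ℂ) :=
  {x | x ∈ X ∧ x ≠ 0 ∧ ¬ smoothAt X x}

/-- The affine cone over the (reduced) singular locus of the Kalman variety of the projective
variety with affine cone `X`. -/
def singKalmanCone {n : ℕ} (X : Set (Fin n → ℂ)) : Set (MatSpace n) :=
  zClosure (projSingCone (zClosure (kalmanCone X)))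



/-! ## The spaces `ℙ_s = ℙ^{n²-1} × (ℙ^{n-1})^s` (as multicones) -/

/-- Coordinates for the multicone over `ℙ^{n²-1} × (ℙ^{n-1})^{×s}`. -/
abbrev MIdx (n s : ℕ) := (Fin n × Fin n) ⊕ (Fin s × Fin n)

/-- The matrix component of a point of the multicone. -/
def matPart {n s : ℕ} (x : MIdx n s → ℂ) : MatSpace n := fun ij => x (Sum.inl ij)

/-- The `i`-th vector component of a point of the multicone. -/
def vecPart {n s : ℕ} (x : MIdx n s → ℂ) (i : Fin s) : Fin n → ℂ := fun k => x (Sum.inr (i, k))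

/-- A partition of `{1, …, s}` into `k` (indexed) nonempty pairwise disjoint blocks. -/
structure IdxPartition (s k : ℕ) where
  block : Fin k → Finset (Fin s)
  nonempty : ∀ i, (block i).Nonempty
  disj : ∀ i j, i ≠ j → Disjoint (block i) (block j)
  cover : ∀ p : Fin s, ∃ i, p ∈ block i

/-- The minimal representative of the `i`-th block. -/
def IdxPartition.rep {s k : ℕ} (P : IdxPartition s k) (i : Fin k) : Fin s :=
  (P.block i).min' (P.nonempty i)

/-- The finest partition, all of whose blocks are singletons. -/
def singletonPartition (s : ℕ) : IdxPartition s s where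
  block i := {i}
  nonempty i := ⟨i, by simp⟩
  disj i j h := Finset.disjoint_singleton.2 h
  cover p := ⟨p, by simp⟩

/-- A tuple of nonzero vectors is `P`-compatible: vectors within each block of `P` are
proportional, and representatives of the distinct blocks are linearly independent. -/
def PCompatible {n s k : ℕ} (P : IdxPartition s k) (v : Fin s → Fin n → ℂ) : Prop :=
  (∀ p, v p ≠ 0) ∧
  (∀ i, ∀ p ∈ P.block i, ∀ q ∈ P.block i, ∃ c : ℂ, v p = c • v q) ∧
  (∀ r : Fin k → Fin s, (∀ i, r i ∈ P.block i) → LinearIndependent ℂ (fun i => v (r i)))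

/-- The multicone over `W_s`: tuples `(A, v_1, …, v_s)` where each `v_i` is an eigenvector of
the (nonzero) matrix `A`. -/
def Wcone (n s : ℕ) : Set (MIdx n s → ℂ) :=
  {x | matPart x ≠ 0 ∧ ∀ i, IsEigenvector (toMat (matPart x)) (vecPart x i)}

/-- The multicone over `W_{s,P}`: the Zariski closure of the set of tuples in `W_s` whose
vector part is `P`-compatible. -/
def WsPcone (n : ℕ) {s k : ℕ} (P : IdxPartition s k) : Set (MIdx n s → ℂ) :=
  zClosure {x | x ∈ Wcone n s ∧ PCompatible P (fun i => vecPart x i)}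

/-! ## Multidegrees -/

/-- Parameter space for a multiprojective slice of multidegree type `γ`. -/
abbrev MSliceParam (n s : ℕ) (γ : Fin (s + 1) → ℕ) : Type :=
  (Fin (n ^ 2 - γ 0) × Option (Fin n × Fin n)) ⊕ ((Σ j : Fin s, Fin (n - γ j.succ)) × Option (Fin n))

/-- The multiprojective affine-linear slice with parameters `a`: it cuts the matrix factor by
`n² - γ 0` affine-linear equations and the `j`-th vector factor by `n - γ (j+1)` affine-linear
equations. -/
def mSlice {n s : ℕ} (γ : Fin (s + 1) → ℕ) (a : MSliceParam n s γ → ℂ) :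
    Set (MIdx n s → ℂ) :=
  {x | (∀ r : Fin (n ^ 2 - γ 0),
          a (Sum.inl (r, none)) +
            ∑ ij : Fin n × Fin n, a (Sum.inl (r, some ij)) * x (Sum.inl ij) = 0) ∧
       (∀ j : Fin s, ∀ r : Fin (n - γ j.succ),
          a (Sum.inr (⟨j, r⟩, none)) +
            ∑ k : Fin n, a (Sum.inr (⟨j, r⟩, some k)) * x (Sum.inr (j, k)) = 0)}

/-- `hasMD W γ δ` : the coefficient of the monomial `h_0^{γ 0} h_1^{γ 1} ⋯ h_s^{γ s}` in the
Chow class of the multiprojective variety with multicone `W ⊆ ℂ^{n²} × (ℂ^n)^s` equals `δ`: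
a generic multiprojective slice of type `γ` meets `W` in exactly `δ` points. -/
def hasMD {n s : ℕ} (W : Set (MIdx n s → ℂ)) (γ : Fin (s + 1) → ℕ) (δ : ℕ) : Prop :=
  ∃ U : Set (MSliceParam n s γ → ℂ), zOpen U ∧ zDense U ∧
    ∀ a ∈ U, (W ∩ mSlice γ a).ncard = δ

/-- The exponent vector of the monomial `h_0 · h_1^{n-1} ⋯ h_i^{n-2} ⋯ h_s^{n-1}`. -/
def specialExp (n s : ℕ) (i : Fin s) : Fin (s + 1) → ℕ :=
  fun j => if j = 0 then 1 else if j = i.succ then n - 2 else n - 1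

/-- `γ` lies in the box of admissible exponents of the Chow ring of `ℙ^{n²-1} × (ℙ^{n-1})^s`. -/
def inBox (n s : ℕ) (γ : Fin (s + 1) → ℕ) : Prop :=
  γ 0 < n ^ 2 ∧ ∀ j : Fin s, γ j.succ < n

/-- `representsClass W c q` : the polynomial `q` represents the Chow class of the
multiprojective variety with multicone `W`, of codimension `c`: its coefficients in the
admissible box in degree `c` are the multidegrees of `W`, and all other coefficients vanish. -/
def representsClass {n s : ℕ} (W : Set (MIdx n s → ℂ)) (c : ℕ)
    (q : MvPolynomial (Fin (s + 1)) ℤ) : Prop :=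
  (∀ γ : Fin (s + 1) → ℕ, inBox n s γ → (∑ j, γ j) = c →
      ∃ δ : ℕ, q.coeff (Finsupp.equivFunOnFinite.symm γ) = (δ : ℤ) ∧ hasMD W γ δ) ∧
  (∀ γ : Fin (s + 1) → ℕ, ¬ (inBox n s γ ∧ (∑ j, γ j) = c) →
      q.coeff (Finsupp.equivFunOnFinite.symm γ) = 0)

/-! ## The Chow ring of `ℙ^{n²-1} × (ℙ^{n-1})^s` -/

/-- The defining ideal of the Chow ring `ℤ[h_0, …, h_s]/(h_0^{n²}, h_1^n, …, h_s^n)`. -/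
def chowIdeal (n s : ℕ) : Ideal (MvPolynomial (Fin (s + 1)) ℤ) :=
  Ideal.span ({MvPolynomial.X 0 ^ n ^ 2} ∪
    Set.range fun j : Fin s => MvPolynomial.X j.succ ^ n)

/-- The Chow ring `A^*(ℙ_s) = ℤ[h_0, …, h_s]/(h_0^{n²}, h_1^n, …, h_s^n)`. -/
abbrev ChowRing (n s : ℕ) := MvPolynomial (Fin (s + 1)) ℤ ⧸ chowIdeal n s

/-- The variable substitution `h_0 ↦ t_0`, `h_i ↦ t_{q_i}` underlying `φ_P`. -/
def blockVarMap {s k : ℕ} (P : IdxPartition s k) : Fin (k + 1) → Fin (s + 1) :=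
  Fin.cases 0 fun i => (P.rep i).succ

lemma phiP_aux {n s k : ℕ} (P : IdxPartition s k) :
    ∀ a ∈ chowIdeal n k,
      ((Ideal.Quotient.mk (chowIdeal n s)).comp
        (MvPolynomial.rename (R := ℤ) (blockVarMap P)).toRingHom) a = 0 := by
  intro a ha
  rw [RingHom.comp_apply, Ideal.Quotient.eq_zero_iff_mem]
  have hmap : (MvPolynomial.rename (R := ℤ) (blockVarMap P)).toRingHom a ∈
      Ideal.map (MvPolynomial.rename (R := ℤ) (blockVarMap P)).toRingHom
        (chowIdeal n k) :=
    Ideal.mem_map_of_mem _ ha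
  have hle : Ideal.map
      (MvPolynomial.rename (R := ℤ) (blockVarMap P)).toRingHom
      (chowIdeal n k) ≤ chowIdeal n s := by
    rw [chowIdeal, Ideal.map_span, Ideal.span_le]
    rintro q ⟨p, hp, rfl⟩
    rcases hp with hp | ⟨j, rfl⟩
    · rw [Set.mem_singleton_iff] at hp
      subst hp
      simp only [AlgHom.toRingHom_eq_coe, RingHom.coe_coe, map_pow, MvPolynomial.rename_X,
        Fin.cases_zero]
      exact Ideal.subset_span (Or.inl rfl)
    · simp only [AlgHom.toRingHom_eq_coe, RingHom.coe_coe, map_pow, MvPolynomial.rename_X,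
        Fin.cases_succ]
      exact Ideal.subset_span (Or.inr ⟨P.rep j, rfl⟩)
  exact hle hmap

/-- The ring map `φ_P : A^*(ℙ_k) → A^*(ℙ_s)` sending `h_0 ↦ t_0` and `h_i ↦ t_{q_i}`. -/
def phiP (n : ℕ) {s k : ℕ} (P : IdxPartition s k) : ChowRing n k →+* ChowRing n s :=
  Ideal.Quotient.lift (chowIdeal n k)
    ((Ideal.Quotient.mk (chowIdeal n s)).comp
      (MvPolynomial.rename (R := ℤ) (blockVarMap P)).toRingHom)
    (phiP_aux P)



/-! ## Discriminants of characteristic polynomials -/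

/-- `∏_{i<j} (l i - l j)^2` for a list `l`. -/
def listPairProdSq (l : List ℂ) : ℂ :=
  ∏ p ∈ Finset.univ.filter (fun p : Fin l.length × Fin l.length => p.1 < p.2),
    (l.get p.1 - l.get p.2) ^ 2

/-- The product of the squared differences of all pairs of elements of a multiset; applied to
the multiset of roots of a characteristic polynomial this is the discriminant. -/
def pairProdSq (m : Multiset ℂ) : ℂ := listPairProdSq m.toList

/-- The coordinate vector (for the action of the symmetric power `ρ_d`) of the symmetric
product `v_1 ⋯ v_d` of the vectors `v i`: its `σ`-th coordinate is the coefficient of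
`t_1 ⋯ t_d` in `∏_k (∑_i t_i v i k)^{σ_k}`. -/
def symProdVec {n d : ℕ} (v : Fin d → Fin n → ℂ) : MonIdx n d → ℂ := fun σ =>
  MvPolynomial.coeff (Finsupp.equivFunOnFinite.symm fun _ : Fin d => 1)
    (∏ k : Fin n, (∑ i : Fin d, MvPolynomial.C (v i k) * MvPolynomial.X i) ^ (monExp σ k))

/-!
Both discriminants cut out multiple eigenvalues, and by the Hautus test `det K_d(f)` vanishes at
`A` exactly when `f` annihilates an eigenvector of `ρ_d(A)`. If `A` has simple spectrum then
`ρ_d(A)` is diagonalizable; if `ρ_d(A)` nevertheless has a multiple eigenvalue, it has a plane of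
eigenvectors, which meets the hyperplane defined by `f`. So `Δ * det K_d(f)` vanishes on the zeros
of `Δ_d`, and by the Nullstellensatz each irreducible factor of `Δ_d` divides `Δ` or `det K_d(f)`.
Conversely, where `Δ_d ≠ 0` the matrix `ρ_d(A)` is nonderogatory, so `det K_d(f) ≠ 0` for some `f`;
hence a common factor of all these determinants vanishes only where `Δ_d` does.

The matrices with a multiple eigenvalue form the image of an affine space under a polynomial map,
so the irreducible factors of `Δ` all have the same zeros. At one such zero, a Jordan matrix with a
single block of size two and otherwise multiplicatively independent eigenvalues, every `ρ_d` is
still nonderogatory; hence no irreducible factor of `Δ` divides `det K_d(f)` for generic `f`.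
-/

/-! # Multiple eigenvalues -/

section SimpleSpectrum

open Matrix Module

variable {K ι : Type*} [Field K] [Fintype ι] [DecidableEq ι]

/-- The characteristic polynomial of `M` has no repeated root in `K`; over an algebraically closed
field this says that the eigenvalues of `M` are pairwise distinct. -/
def HasSimpleSpectrum (M : Matrix ι ι K) : Prop :=
  M.charpoly.roots.Nodup

/-- Independent vectors `v`, `w` spanning an `M`-stable plane, on which `M` acts by the triangular
matrix `!![l, a; 0, l]`; the case `a = 0` is included. -/
structure IsJordanPair (M : Matrix ι ι K) (l a : K) (v w : ι → K) : Prop where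
  linearIndependent : LinearIndependent K ![v, w]
  mulVec_left : M *ᵥ v = l • v
  mulVec_right : M *ᵥ w = l • w + a • v

omit [DecidableEq ι] in
theorem IsJordanPair.smul {M : Matrix ι ι K} {l a : K} {v w : ι → K} (h : IsJordanPair M l a v w)
    (c : K) : IsJordanPair (c • M) (c * l) (c * a) v w where
  linearIndependent := h.linearIndependent
  mulVec_left := by rw [smul_mulVec, h.mulVec_left, smul_smul]
  mulVec_right := by rw [smul_mulVec, h.mulVec_right, smul_add, smul_smul, smul_smul]

omit [Fintype ι] in
theorem linearIndependent_pair_single {i j : ι} (hij : i ≠ j) :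
    LinearIndependent K ![(Pi.single i 1 : ι → K), Pi.single j 1] :=
  LinearIndependent.pair_iff.mpr fun s t hst =>
    ⟨by simpa [hij] using congrFun hst i, by simpa [hij.symm] using congrFun hst j⟩

theorem pairProdSq_eq_zero_iff {m : Multiset ℂ} : pairProdSq m = 0 ↔ ¬ m.Nodup := by
  rw [← Multiset.coe_toList m, Multiset.coe_nodup, pairProdSq, Multiset.coe_toList, listPairProdSq,
    List.nodup_iff_pairwise_ne, List.pairwise_iff_get]
  simp [Finset.prod_eq_zero_iff, sub_eq_zero]

theorem one_lt_finrank_iff_exists_linearIndependent_pair {V : Type*} [AddCommGroup V] [Module K V]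
    [FiniteDimensional K V] (p : Submodule K V) :
    1 < finrank K p ↔ ∃ v ∈ p, ∃ w ∈ p, LinearIndependent K ![v, w] := by
  refine ⟨fun h => ?_, fun ⟨v, hv, w, hw, hvw⟩ => ?_⟩
  · obtain ⟨v, hv⟩ := finrank_pos_iff_exists_ne_zero.mp (zero_lt_one.trans h)
    obtain ⟨w, hvw⟩ := exists_linearIndependent_pair_of_one_lt_finrank h hv
    refine ⟨v, v.2, w, w.2, ?_⟩
    rw [LinearIndependent.pair_iff] at hvw ⊢
    exact fun s t hst => hvw s t (Subtype.ext hst)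
  · have hpair : LinearIndependent K ![(⟨v, hv⟩ : p), ⟨w, hw⟩] := by
      rw [LinearIndependent.pair_iff] at hvw ⊢
      exact fun s t hst => hvw s t (congrArg Subtype.val hst)
    exact hpair.fintype_card_le_finrank

theorem hasSimpleSpectrum_iff_finrank_maxGenEigenspace_le_one {M : Matrix ι ι K} :
    HasSimpleSpectrum M ↔ ∀ μ, finrank K (End.maxGenEigenspace (toLin' M) μ) ≤ 1 := by
  classical
  simp only [HasSimpleSpectrum, Multiset.nodup_iff_count_le_one, Polynomial.count_roots,
    LinearMap.finrank_maxGenEigenspace_eq, charpoly_toLin']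

theorem IsJordanPair.not_hasSimpleSpectrum {M : Matrix ι ι K} {l a : K} {v w : ι → K}
    (h : IsJordanPair M l a v w) : ¬ HasSimpleSpectrum M := by
  rw [hasSimpleSpectrum_iff_finrank_maxGenEigenspace_le_one, not_forall]
  have hv : (toLin' M - l • 1) v = 0 := by simp [h.mulVec_left]
  have hw : (toLin' M - l • 1) w = a • v := by simp [h.mulVec_right]
  refine ⟨l, not_le.mpr ((one_lt_finrank_iff_exists_linearIndependent_pair _).mpr
    ⟨v, ?_, w, ?_, h.linearIndependent⟩)⟩
  · exact (End.mem_maxGenEigenspace _ _ _).mpr ⟨1, by simpa using hv⟩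
  · exact (End.mem_maxGenEigenspace _ _ _).mpr ⟨2, by
      rw [pow_two, End.mul_apply, hw, map_smul, hv, smul_zero]⟩

theorem maxGenEigenspace_le_eigenspace {V : Type*} [AddCommGroup V] [Module K V] {f : End K V}
    {μ : K} (h : ∀ x, (f - μ • 1) ((f - μ • 1) x) = 0 → (f - μ • 1) x = 0) :
    f.maxGenEigenspace μ ≤ f.eigenspace μ := by
  intro x hx
  obtain ⟨k, hk⟩ := (End.mem_maxGenEigenspace _ _ _).mp hx
  induction k generalizing x with
  | zero => simp_all
  | succ k ih =>
    rw [pow_succ, End.mul_apply] at hk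
    have hx' := ih ((End.mem_maxGenEigenspace _ _ _).mpr ⟨k, hk⟩) hk
    rw [End.mem_eigenspace_iff, ← sub_eq_zero] at hx' ⊢
    exact h x hx'

theorem exists_isJordanPair_of_not_hasSimpleSpectrum {M : Matrix ι ι K}
    (h : ¬ HasSimpleSpectrum M) : ∃ l a v w, IsJordanPair M l a v w := by
  rw [hasSimpleSpectrum_iff_finrank_maxGenEigenspace_le_one, not_forall] at h
  obtain ⟨μ, hμ⟩ := h
  set N : End K (ι → K) := toLin' M - μ • 1 with hN
  have mulVec_eq (x : ι → K) : M *ᵥ x = μ • x + N x := by simp [hN]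
  by_cases hker : ∀ x, N (N x) = 0 → N x = 0
  · have hdim := (not_le.mp hμ).trans_le
      (Submodule.finrank_mono (maxGenEigenspace_le_eigenspace hker))
    obtain ⟨v, hv, w, hw, hvw⟩ := (one_lt_finrank_iff_exists_linearIndependent_pair _).mp hdim
    rw [End.mem_eigenspace_iff, toLin'_apply] at hv hw
    exact ⟨μ, 0, v, w, hvw, hv, by rw [hw, zero_smul, add_zero]⟩
  · push Not at hker
    obtain ⟨x, hNN, hNx⟩ := hker
    refine ⟨μ, 1, N x, x, LinearIndependent.pair_iff.mpr fun s t hst => ?_, ?_, ?_⟩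
    · have ht : t = 0 := by simpa [hNN, hNx] using congrArg N hst
      exact ⟨by simpa [ht, hNx] using hst, ht⟩
    · rw [mulVec_eq, hNN, add_zero]
    · rw [mulVec_eq, one_smul]

theorem HasSimpleSpectrum.of_subsingleton [Subsingleton ι] (M : Matrix ι ι K) :
    HasSimpleSpectrum M :=
  hasSimpleSpectrum_iff_finrank_maxGenEigenspace_le_one.mpr fun _ =>
    (Submodule.finrank_le _).trans
      ((finrank_fintype_fun_eq_card K).trans_le (Fintype.card_le_one_iff_subsingleton.mpr ‹_›))

theorem hasSimpleSpectrum_transpose {M : Matrix ι ι K} :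
    HasSimpleSpectrum Mᵀ ↔ HasSimpleSpectrum M := by
  rw [HasSimpleSpectrum, HasSimpleSpectrum, charpoly_transpose]

theorem hasSimpleSpectrum_diagonal {D : ι → K} :
    HasSimpleSpectrum (diagonal D) ↔ Function.Injective D := by
  have hroots : (diagonal D).charpoly.roots = Finset.univ.val.map D := by
    rw [charpoly_diagonal]
    simpa [Multiset.map_map] using
      Polynomial.roots_multiset_prod_X_sub_C (Finset.univ.val.map D)
  rw [HasSimpleSpectrum, hroots, Finset.nodup_map_iff_injOn, Finset.coe_univ, Set.injOn_univ]

/-- Similarity to a diagonal matrix over the same field. -/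
def IsDiagonalizable (M : Matrix ι ι K) : Prop :=
  ∃ (P : (Matrix ι ι K)ˣ) (D : ι → K), M = P.val * diagonal D * P⁻¹.val

/-- Every eigenspace over `K` has dimension at most one; over an algebraically closed field this
says that the minimal and the characteristic polynomial of `M` agree. -/
def IsNonderogatory (M : Matrix ι ι K) : Prop :=
  ∀ μ, finrank K (End.eigenspace (toLin' M) μ) ≤ 1

theorem HasSimpleSpectrum.isNonderogatory {M : Matrix ι ι K} (h : HasSimpleSpectrum M) :
    IsNonderogatory M := fun μ =>
  (Submodule.finrank_mono End.eigenspace_le_maxGenEigenspace).trans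
    (hasSimpleSpectrum_iff_finrank_maxGenEigenspace_le_one.mp h μ)

theorem HasSimpleSpectrum.isDiagonalizable [IsAlgClosed K] {M : Matrix ι ι K}
    (h : HasSimpleSpectrum M) : IsDiagonalizable M := by
  classical
  have hcard : Fintype.card ι = Fintype.card M.charpoly.roots.toFinset := by
    rw [Fintype.card_coe, Multiset.toFinset_card_of_nodup h, ← M.charpoly_natDegree_eq_dim]
    exact (IsAlgClosed.splits M.charpoly).natDegree_eq_card_roots
  let e := Fintype.equivOfCardEq hcard
  have hev (i : ι) : End.HasEigenvalue (toLin' M) (e i : K) := by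
    rw [End.hasEigenvalue_iff_isRoot_charpoly, charpoly_toLin']
    exact Polynomial.isRoot_of_mem_roots (Multiset.mem_toFinset.mp (e i).2)
  choose v hv using fun i => (hev i).exists_hasEigenvector
  have hunit : IsUnit (of v)ᵀ := linearIndependent_cols_iff_isUnit.mp
    (End.eigenvectors_linearIndependent' _ _ (Subtype.val_injective.comp e.injective) v hv)
  refine ⟨hunit.unit, fun i => e i, (Units.eq_mul_inv_iff_mul_eq _).mpr ?_⟩
  ext a i
  have hvi : (M *ᵥ v i) a = e i * v i a := congrFun (hv i).apply_eq_smul a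
  rw [mul_diagonal, mul_comm _ (e i : K)]
  exact hvi

theorem IsDiagonalizable.hasSimpleSpectrum {M : Matrix ι ι K} (h : IsDiagonalizable M)
    (hM : IsNonderogatory M) : HasSimpleSpectrum M := by
  obtain ⟨P, D, rfl⟩ := h
  rw [HasSimpleSpectrum, coe_units_inv, charpoly_units_conj]
  refine hasSimpleSpectrum_diagonal.mpr fun i j hij => ?_
  by_contra hne
  have hP (k : ι) : P.val.col k ∈
      End.eigenspace (toLin' (P.val * diagonal D * P⁻¹.val)) (D k) := by
    rw [End.mem_eigenspace_iff, toLin'_apply, ← mulVec_single_one, mulVec_mulVec,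
      Units.inv_mul_cancel_right, ← mulVec_mulVec, diagonal_mulVec_single, ← mulVec_smul]
    congr 1
    ext a
    simp [Pi.single_apply]
  have hcols : LinearIndependent K (P.val.col ∘ ![i, j]) :=
    (linearIndependent_cols_iff_isUnit.mpr P.isUnit).comp _ (injective_pair_iff_ne.mpr hne)
  refine (hM (D i)).not_gt ((one_lt_finrank_iff_exists_linearIndependent_pair _).mpr
    ⟨_, hP i, _, hij ▸ hP j, ?_⟩)
  rw [← FinVec.map_eq] at hcols
  exact hcols

end SimpleSpectrum

/-! # The Kalman matrix and the Hautus test -/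

section Kalman

open Matrix Module

variable {ι : Type*} [Fintype ι] [DecidableEq ι]

/-- The Kalman observability matrix of the pair `(c, M)`: its rows are `c, c M, …, c M ^ (N - 1)`
with `N = card ι`, indexed by `ι` itself through a fixed enumeration. -/
def kalmanMatrix {R : Type*} [CommRing R] (M : Matrix ι ι R) (c : ι → R) : Matrix ι ι R :=
  of fun σ => c ᵥ* M ^ (Fintype.equivFin ι σ : ℕ)

theorem kalmanMatrix_map {R S : Type*} [CommRing R] [CommRing S] (φ : R →+* S) (M : Matrix ι ι R)
    (c : ι → R) : (kalmanMatrix M c).map φ = kalmanMatrix (M.map φ) (φ ∘ c) := by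
  ext σ τ
  simp [kalmanMatrix, RingHom.map_vecMul, ← Matrix.map_pow]

theorem kalmanMatrix_mulVec_eq_zero_iff {R : Type*} [CommRing R] {M : Matrix ι ι R}
    {c w : ι → R} : kalmanMatrix M c *ᵥ w = 0 ↔ ∀ k : ℕ, c ⬝ᵥ M ^ k *ᵥ w = 0 := by
  have hrow (σ : ι) :
      (kalmanMatrix M c *ᵥ w) σ = c ⬝ᵥ M ^ (Fintype.equivFin ι σ : ℕ) *ᵥ w :=
    (dotProduct_mulVec _ _ _).symm
  refine ⟨fun h k => ?_, fun h => funext fun σ => (hrow σ).trans (h _)⟩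
  have hlt (i : ℕ) (hi : i < Fintype.card ι) : c ⬝ᵥ M ^ i *ᵥ w = 0 := by
    simpa [hrow] using congrFun h ((Fintype.equivFin ι).symm ⟨i, hi⟩)
  nontriviality R
  rw [pow_eq_aeval_mod_charpoly, Polynomial.aeval_def, Polynomial.eval₂_eq_sum,
    Polynomial.sum_def, sum_mulVec, dotProduct_sum]
  refine Finset.sum_eq_zero fun i hi => ?_
  have hdeg := (Polynomial.le_degree_of_mem_supp i hi).trans_lt
    (Polynomial.degree_modByMonic_lt (Polynomial.X ^ k) M.charpoly_monic)
  rw [M.charpoly_degree_eq_dim, Nat.cast_lt] at hdeg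
  rw [← Algebra.smul_def, smul_mulVec, dotProduct_smul, hlt i hdeg, smul_zero]

variable {K : Type*} [Field K] {M : Matrix ι ι K} {c : ι → K}

theorem det_kalmanMatrix_eq_zero_of_mulVec_eq_smul {μ : K} {w : ι → K} (hw0 : w ≠ 0)
    (hw : M *ᵥ w = μ • w) (hcw : c ⬝ᵥ w = 0) : (kalmanMatrix M c).det = 0 := by
  refine exists_mulVec_eq_zero_iff.mp ⟨w, hw0, kalmanMatrix_mulVec_eq_zero_iff.mpr fun k => ?_⟩
  have hpow : M ^ k *ᵥ w = μ ^ k • w := by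
    induction k with
    | zero => simp
    | succ k ih => rw [pow_succ, ← mulVec_mulVec, hw, mulVec_smul, ih, smul_smul, pow_succ']
  rw [hpow, dotProduct_smul, hcw, smul_zero]

theorem det_kalmanMatrix_eq_zero_iff [IsAlgClosed K] :
    (kalmanMatrix M c).det = 0 ↔ ∃ (μ : K) (w : ι → K), w ≠ 0 ∧ M *ᵥ w = μ • w ∧ c ⬝ᵥ w = 0 := by
  constructor
  · intro hdet
    obtain ⟨w, hw0, hw⟩ := exists_mulVec_eq_zero_iff.mpr hdet
    set p := LinearMap.ker (kalmanMatrix M c).mulVecLin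
    have hp (x : ι → K) : x ∈ p ↔ ∀ k : ℕ, c ⬝ᵥ M ^ k *ᵥ x = 0 := by
      rw [LinearMap.mem_ker, mulVecLin_apply, kalmanMatrix_mulVec_eq_zero_iff]
    have hMp : ∀ x ∈ p, toLin' M x ∈ p := fun x hx => (hp _).mpr fun k => by
      simpa [pow_succ] using (hp x).mp hx (k + 1)
    have : Nontrivial p := ⟨⟨w, LinearMap.mem_ker.mpr hw⟩, 0, fun h => hw0 (congrArg Subtype.val h)⟩
    obtain ⟨μ, hμ⟩ := End.exists_eigenvalue ((toLin' M).restrict hMp)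
    obtain ⟨x, hx⟩ := hμ.exists_hasEigenvector
    exact ⟨μ, x, fun h => hx.2 (Subtype.ext h), congrArg Subtype.val hx.apply_eq_smul,
      by simpa using (hp x).mp x.2 0⟩
  · rintro ⟨μ, w, hw0, hw, hcw⟩
    exact det_kalmanMatrix_eq_zero_of_mulVec_eq_smul hw0 hw hcw

theorem IsNonderogatory.exists_det_kalmanMatrix_ne_zero [IsAlgClosed K]
    (hM : IsNonderogatory M) : ∃ c : ι → K, (kalmanMatrix M c).det ≠ 0 := by
  choose g hg using fun μ => finrank_le_one_iff.mp (hM μ)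
  have hg0 (μ : End.Eigenvalues (toLin' M)) : ∃ c : ι → K, (dotProductEquiv K ι (g μ)) c ≠ 0 := by
    by_contra! h
    have hgμ : g μ = 0 := Subtype.ext (dotProduct_eq_zero _ h)
    exact μ.2 ((Submodule.eq_bot_iff _).mpr fun x hx => by
      obtain ⟨t, ht⟩ := hg μ ⟨x, hx⟩
      simpa [hgμ] using (congrArg Subtype.val ht).symm)
  obtain ⟨c, hc⟩ := Dual.exists_forall_ne_zero_of_forall_exists _ hg0
  refine ⟨c, fun h => ?_⟩
  obtain ⟨μ, w, hw0, hw, hcw⟩ := det_kalmanMatrix_eq_zero_iff.mp h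
  have hmem : w ∈ End.eigenspace (toLin' M) μ := End.mem_eigenspace_iff.mpr hw
  obtain ⟨t, ht⟩ := hg μ ⟨w, hmem⟩
  obtain rfl : t • (g μ : ι → K) = w := congrArg Subtype.val ht
  rw [dotProduct_smul, smul_eq_zero, dotProduct_comm] at hcw
  have hμ : End.HasEigenvalue (toLin' M) μ := End.hasEigenvalue_of_hasEigenvector ⟨hmem, hw0⟩
  exact hcw.elim (fun ht0 => hw0 (by rw [ht0, zero_smul])) (hc ⟨μ, hμ⟩)

theorem isNonderogatory_of_det_kalmanMatrix_ne_zero (h : (kalmanMatrix M c).det ≠ 0) :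
    IsNonderogatory M := by
  intro μ
  by_contra! hμ
  obtain ⟨v, hv, w, hw, hvw⟩ := (one_lt_finrank_iff_exists_linearIndependent_pair _).mp hμ
  have eq_zero (x : ι → K) (hx : x ∈ End.eigenspace (toLin' M) μ) (hcx : c ⬝ᵥ x = 0) : x = 0 := by
    by_contra hx0
    exact h (det_kalmanMatrix_eq_zero_of_mulVec_eq_smul hx0 (End.mem_eigenspace_iff.mp hx) hcx)
  have hcomb : (c ⬝ᵥ w) • v + (-(c ⬝ᵥ v)) • w = 0 :=
    eq_zero _ (add_mem (Submodule.smul_mem _ _ hv) (Submodule.smul_mem _ _ hw)) (by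
      simp only [dotProduct_add, dotProduct_smul, smul_eq_mul]; ring)
  exact hvw.ne_zero 1 (eq_zero w hw (LinearIndependent.pair_iff.mp hvw _ _ hcomb).1)

end Kalman

/-! # Symmetric powers of matrices -/

section SymPow

open Matrix MvPolynomial

variable {R : Type*} [CommRing R] {n d : ℕ}

theorem monExp_injective : Function.Injective (monExp : MonIdx n d → Fin n →₀ ℕ) :=
  Multiset.toFinsupp.injective.comp Sym.coe_injective

theorem degree_monExp (σ : MonIdx n d) : (monExp σ).degree = d := by
  have h := congrArg Multiset.card (Multiset.toFinsupp_toMultiset σ.1)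
  rwa [Finsupp.card_toMultiset, σ.2] at h

theorem exists_monExp_eq {e : Fin n →₀ ℕ} (he : e.degree = d) : ∃ σ : MonIdx n d, monExp σ = e :=
  ⟨⟨Finsupp.toMultiset e, (Finsupp.card_toMultiset e).trans he⟩, Finsupp.toMultiset_toFinsupp e⟩

/-- The linear form `∑ k, v k * x_k`. -/
def linForm : (Fin n → R) →ₗ[R] MvPolynomial (Fin n) R :=
  Fintype.linearCombination R X

/-- The substitution `x_j ↦ ∑ k, A j k * x_k`, i.e. the action of `A` on forms of all degrees. -/
def linSubst (A : Matrix (Fin n) (Fin n) R) : MvPolynomial (Fin n) R →ₐ[R] MvPolynomial (Fin n) R :=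
  bind₁ fun j => linForm (A j)

/-- The coefficients of a polynomial in degree `d`, indexed as the rows of `symPow d`. -/
def formCoeffs (d : ℕ) : MvPolynomial (Fin n) R →ₗ[R] (MonIdx n d → R) :=
  LinearMap.pi fun σ => lcoeff R (monExp σ)

theorem linForm_apply (v : Fin n → R) : linForm v = ∑ k, C (v k) * X k := by
  simp [linForm, Fintype.linearCombination_apply, smul_eq_C_mul]

theorem formCoeffs_apply (F : MvPolynomial (Fin n) R) (σ : MonIdx n d) :
    formCoeffs d F σ = coeff (monExp σ) F := rfl

theorem linForm_injective : Function.Injective (linForm : (Fin n → R) → _) := by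
  intro v w h
  ext k
  simpa [linForm_apply, coeff_sum, coeff_C_mul, coeff_X, Finsupp.single_left_inj,
    Finset.sum_ite_eq] using congrArg (coeff (Finsupp.single k 1)) h

theorem isHomogeneous_linForm (v : Fin n → R) : (linForm v).IsHomogeneous 1 := by
  rw [linForm_apply]
  exact IsHomogeneous.sum _ _ _ fun k _ => isHomogeneous_C_mul_X _ _

theorem isHomogeneous_linSubst (A : Matrix (Fin n) (Fin n) R) {F : MvPolynomial (Fin n) R}
    (hF : F.IsHomogeneous d) : (linSubst A F).IsHomogeneous d := by
  simpa [linSubst] using hF.aeval (fun j => linForm (A j)) fun j => isHomogeneous_linForm _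

theorem linSubst_X (A : Matrix (Fin n) (Fin n) R) (j : Fin n) : linSubst A (X j) = linForm (A j) :=
  bind₁_X_right _ _

theorem linSubst_monomial (A : Matrix (Fin n) (Fin n) R) (e : Fin n →₀ ℕ) :
    linSubst A (monomial e 1) = ∏ j, linForm (A j) ^ e j := by
  rw [linSubst, bind₁_monomial, C_1, one_mul]
  exact Finsupp.prod_fintype e (fun j k => linForm (A j) ^ k) fun _ => pow_zero _

theorem linSubst_linForm (A : Matrix (Fin n) (Fin n) R) (v : Fin n → R) :
    linSubst A (linForm v) = linForm (v ᵥ* A) := by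
  rw [vecMul_eq_sum]
  simp [linForm, linSubst, Fintype.linearCombination_apply]

theorem linSubst_mul (A B : Matrix (Fin n) (Fin n) R) (F : MvPolynomial (Fin n) R) :
    linSubst (A * B) F = linSubst B (linSubst A F) := by
  have h : linSubst (A * B) = (linSubst B).comp (linSubst A) := algHom_ext fun j => by
    simp [linSubst_X, linSubst_linForm, mul_apply_eq_vecMul]
  exact DFunLike.congr_fun h F

theorem sum_formCoeffs_smul_monomial {F : MvPolynomial (Fin n) R} (hF : F.IsHomogeneous d) :
    ∑ σ, formCoeffs d F σ • monomial (monExp σ) 1 = F := by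
  ext e
  simp only [coeff_sum, coeff_smul, coeff_monomial, formCoeffs_apply]
  by_cases he : e.degree = d
  · obtain ⟨σ, rfl⟩ := exists_monExp_eq he
    simp [monExp_injective.eq_iff]
  · rw [hF.coeff_eq_zero he]
    refine Finset.sum_eq_zero fun σ _ => ?_
    rw [if_neg fun h => he (by rw [← h, degree_monExp]), smul_zero]

theorem formCoeffs_eq_zero_iff {F : MvPolynomial (Fin n) R} (hF : F.IsHomogeneous d) :
    formCoeffs d F = 0 ↔ F = 0 := by
  refine ⟨fun h => ?_, fun h => by rw [h, map_zero]⟩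
  rw [← sum_formCoeffs_smul_monomial hF, h]
  simp

theorem symPow_apply (A : Matrix (Fin n) (Fin n) R) (τ : MonIdx n d) :
    symPow d A τ = formCoeffs d (linSubst A (monomial (monExp τ) 1)) := by
  ext σ
  simp only [symPow, of_apply, formCoeffs_apply, linSubst_monomial, linForm_apply]

theorem formCoeffs_vecMul_symPow (A : Matrix (Fin n) (Fin n) R) {F : MvPolynomial (Fin n) R}
    (hF : F.IsHomogeneous d) : formCoeffs d F ᵥ* symPow d A = formCoeffs d (linSubst A F) := by
  conv_rhs => rw [← sum_formCoeffs_smul_monomial hF]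
  simp only [map_sum, map_smul, vecMul_eq_sum, symPow_apply]

theorem symPow_mul (A B : Matrix (Fin n) (Fin n) R) :
    symPow d (A * B) = symPow d A * symPow d B := by
  ext τ : 1
  rw [mul_apply_eq_vecMul, symPow_apply, symPow_apply, linSubst_mul, formCoeffs_vecMul_symPow]
  exact isHomogeneous_linSubst A (isHomogeneous_monomial _ (degree_monExp τ))

theorem linSubst_diagonal_monomial (D : Fin n → R) (e : Fin n →₀ ℕ) :
    linSubst (diagonal D) (monomial e 1) = (∏ k, D k ^ e k) • monomial e 1 := by
  have hrow (j : Fin n) : linForm (diagonal D j) = C (D j) * X j := by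
    simp [linForm_apply, diagonal_apply, apply_ite C]
  simp only [linSubst_monomial, hrow, mul_pow, Finset.prod_mul_distrib, ← map_pow, ← map_prod]
  rw [← smul_eq_C_mul, monomial_eq, C_1, one_mul, Finsupp.prod_fintype _ _ fun _ => pow_zero _]

theorem symPow_diagonal (D : Fin n → R) :
    symPow d (diagonal D) = diagonal fun σ => ∏ k, D k ^ monExp σ k := by
  ext τ σ
  rw [symPow_apply, linSubst_diagonal_monomial, map_smul, Pi.smul_apply, formCoeffs_apply,
    coeff_monomial, diagonal_apply, smul_eq_mul, mul_ite, mul_one, mul_zero]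
  simp only [monExp_injective.eq_iff]

theorem symPow_one : symPow d (1 : Matrix (Fin n) (Fin n) R) = 1 := by
  simp [← diagonal_one, symPow_diagonal]

theorem symPow_map {S : Type*} [CommRing S] (φ : R →+* S) (A : Matrix (Fin n) (Fin n) R) :
    (symPow d A).map φ = symPow d (A.map φ) := by
  ext τ σ
  simp [symPow, ← coeff_map]

/-- `symPow d` as a monoid homomorphism. -/
def symPowHom (n d : ℕ) (R : Type*) [CommRing R] :
    Matrix (Fin n) (Fin n) R →* Matrix (MonIdx n d) (MonIdx n d) R where
  toFun := symPow d
  map_one' := symPow_one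
  map_mul' := symPow_mul

theorem IsDiagonalizable.symPow {K : Type*} [Field K] {A : Matrix (Fin n) (Fin n) K}
    (h : IsDiagonalizable A) (d : ℕ) : IsDiagonalizable (symPow d A) := by
  obtain ⟨P, D, rfl⟩ := h
  exact ⟨Units.map (symPowHom n d K) P, _, by
    rw [symPow_mul, symPow_mul, symPow_diagonal, ← map_inv]; rfl⟩

variable {K : Type*} [Field K] {A : Matrix (Fin n) (Fin n) K}

-- The transposes make `v` and `w` row vectors, that is, linear forms on which `linSubst A` acts.
theorem IsJordanPair.symPow {l a : K} {v w : Fin n → K} (h : IsJordanPair Aᵀ l a v w) (e : ℕ) :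
    IsJordanPair (symPow (e + 1) A)ᵀ (l ^ (e + 1)) (l ^ e * a)
      (formCoeffs (e + 1) (linForm v ^ (e + 1)))
      (formCoeffs (e + 1) (linForm v ^ e * linForm w)) := by
  have hv : linSubst A (linForm v) = l • linForm v := by
    rw [linSubst_linForm, ← mulVec_transpose, h.mulVec_left, map_smul]
  have hw : linSubst A (linForm w) = l • linForm w + a • linForm v := by
    rw [linSubst_linForm, ← mulVec_transpose, h.mulVec_right, map_add, map_smul, map_smul]
  have hom (u : Fin n → K) : (linForm v ^ e * linForm u).IsHomogeneous (e + 1) := by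
    simpa using ((isHomogeneous_linForm v).pow e).mul (isHomogeneous_linForm u)
  rw [pow_succ (linForm v)]
  refine ⟨LinearIndependent.pair_iff.mpr fun s t hst => ?_, ?_, ?_⟩
  · have hprod : linForm v ^ e * linForm (s • v + t • w) = 0 := by
      rw [← formCoeffs_eq_zero_iff (hom _), map_add, map_smul, map_smul, mul_add, mul_smul_comm,
        mul_smul_comm, map_add, map_smul, map_smul, hst]
    have hv0 : linForm v ≠ 0 :=
      (map_ne_zero_iff _ linForm_injective).mpr (h.linearIndependent.ne_zero 0)
    refine LinearIndependent.pair_iff.mp h.linearIndependent s t ?_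
    exact (map_eq_zero_iff _ linForm_injective).mp
      ((mul_eq_zero_iff_left (pow_ne_zero e hv0)).mp hprod)
  · rw [mulVec_transpose, formCoeffs_vecMul_symPow A (hom v), ← map_smul, map_mul, map_pow, hv]
    congr 1
    simp only [smul_eq_C_mul, map_pow]
    ring
  · rw [mulVec_transpose, formCoeffs_vecMul_symPow A (hom w), ← map_smul, ← map_smul, ← map_add,
      map_mul, map_pow, hv, hw]
    congr 1
    simp only [smul_eq_C_mul, map_pow, map_mul]
    ring

theorem HasSimpleSpectrum.of_symPow (hd : 0 < d) (h : HasSimpleSpectrum (symPow d A)) :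
    HasSimpleSpectrum A := by
  obtain ⟨e, rfl⟩ := Nat.exists_eq_add_one.mpr hd
  contrapose! h
  rw [← hasSimpleSpectrum_transpose] at h ⊢
  obtain ⟨l, a, v, w, hvw⟩ := exists_isJordanPair_of_not_hasSimpleSpectrum h
  exact (hvw.symPow e).not_hasSimpleSpectrum

end SymPow

/-! # A Jordan block with nonderogatory symmetric powers -/

section TestMatrix

open Matrix Module MvPolynomial

variable {K : Type*} [Field K]

theorem isNonderogatory_of_support_subset {ι : Type*} [Fintype ι] [DecidableEq ι]
    {M : Matrix ι ι K} (S : K → Set ι) (hS : ∀ μ, (S μ).Subsingleton)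
    (h : ∀ μ w, M *ᵥ w = μ • w → Function.support w ⊆ S μ) : IsNonderogatory M := by
  intro μ
  by_contra! hμ
  obtain ⟨v, hv, w, hw, hvw⟩ := (one_lt_finrank_iff_exists_linearIndependent_pair _).mp hμ
  have support_subset (x : ι → K) (hx : x ∈ End.eigenspace (toLin' M) μ) :
      Function.support x ⊆ S μ := h μ x (End.mem_eigenspace_iff.mp hx)
  obtain ⟨σ, hσ⟩ := Function.ne_iff.mp (hvw.ne_zero 0)
  have eq_zero (x : ι → K) (hx : x ∈ End.eigenspace (toLin' M) μ) (hxσ : x σ = 0) : x = 0 := by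
    by_contra hx0
    obtain ⟨τ, hτ⟩ := Function.ne_iff.mp hx0
    exact hτ (hS μ (support_subset x hx hτ) (support_subset v hv hσ) ▸ hxσ)
  have hcomb : w σ • v + (-v σ) • w = 0 :=
    eq_zero _ (add_mem (Submodule.smul_mem _ _ hv) (Submodule.smul_mem _ _ hw)) (by
      simp only [Pi.add_apply, Pi.smul_apply, smul_eq_mul]; ring)
  exact hσ (neg_eq_zero.mp (LinearIndependent.pair_iff.mp hvw _ _ hcomb).2)

theorem eq_of_binomial_recurrence [CharZero K] {Λ ν : K} (hΛ : Λ ≠ 0) {g : ℕ → K} {s k : ℕ}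
    (h : ∀ b ≤ s, Λ * ∑ m ∈ Finset.range (b + 1), (b.choose m : K) * g m = ν * g b)
    (hk : k ≤ s) (hgk : g k ≠ 0) : ν = Λ ∧ k = s := by
  classical
  have hex : ∃ m, g m ≠ 0 := ⟨k, hgk⟩
  set b := Nat.find hex
  have hgb : g b ≠ 0 := Nat.find_spec hex
  have hlow (m : ℕ) (hm : m < b) : g m = 0 := not_not.mp (Nat.find_min hex hm)
  have hbk : b ≤ k := Nat.find_min' hex hgk
  have hνΛ : ν = Λ := by
    have hrec := h b (hbk.trans hk)
    rw [Finset.sum_range_succ, Finset.sum_eq_zero fun m hm => by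
      rw [hlow m (Finset.mem_range.mp hm), mul_zero], Nat.choose_self, Nat.cast_one, zero_add,
      one_mul] at hrec
    exact (mul_right_cancel₀ hgb hrec).symm
  refine ⟨hνΛ, le_antisymm hk ?_⟩
  by_contra! hks
  have hrec := h (b + 1) (hbk.trans_lt hks)
  rw [Finset.sum_range_succ, Finset.sum_range_succ, Finset.sum_eq_zero fun m hm => by
    rw [hlow m (Finset.mem_range.mp hm), mul_zero], Nat.choose_self, Nat.choose_succ_self_right,
    hνΛ, zero_add, Nat.cast_one, one_mul, mul_add, add_eq_right] at hrec
  exact mul_ne_zero hΛ (mul_ne_zero (Nat.cast_ne_zero.mpr b.succ_ne_zero) hgb) hrec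

variable {n d : ℕ} {i j : Fin n}

/-- The diagonal matrix with entries `μ`, plus `μ j` at position `(j, i)`: a Jordan block of size
two as soon as `μ i = μ j`. -/
def jordanMatrix (μ : Fin n → K) (i j : Fin n) : Matrix (Fin n) (Fin n) K :=
  diagonal μ * transvection j i 1

theorem isJordanPair_jordanMatrix (hij : i ≠ j) {μ : Fin n → K} (hμ : μ i = μ j) :
    IsJordanPair (jordanMatrix μ i j) (μ j) (μ j) (Pi.single j 1) (Pi.single i 1) := by
  have jordanMatrix_mulVec (x : Fin n → K) :
      jordanMatrix μ i j *ᵥ x = diagonal μ *ᵥ (x + x i • Pi.single j 1) := by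
    rw [jordanMatrix, ← mulVec_mulVec, transvection, add_mulVec, one_mulVec, single_mulVec_eq,
      one_mul]
  have diagonal_mulVec (k : Fin n) : diagonal μ *ᵥ Pi.single k 1 = μ k • Pi.single k 1 := by
    rw [diagonal_mulVec_single, ← Pi.single_smul, smul_eq_mul]
  refine ⟨linearIndependent_pair_single hij.symm, ?_, ?_⟩
  · rw [jordanMatrix_mulVec, Pi.single_eq_of_ne hij, zero_smul, add_zero, diagonal_mulVec]
  · rw [jordanMatrix_mulVec, Pi.single_eq_same, one_smul, mulVec_add, diagonal_mulVec,
      diagonal_mulVec, hμ]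

theorem linSubst_transvection_monomial {r : Fin n →₀ ℕ} (hrj : r j = 0) (b : ℕ) :
    linSubst (transvection j i (1 : K)) (monomial (r + Finsupp.single j b) 1) =
      monomial r 1 * (X j + X i) ^ b := by
  have linForm_row_of_ne {k : Fin n} (hk : k ≠ j) : linForm (transvection j i (1 : K) k) = X k := by
    simp [transvection, linForm_apply, one_apply, hk.symm, apply_ite C]
  have linForm_row_same : linForm (transvection j i (1 : K) j) = X j + X i := by
    simp [transvection, linForm_apply, one_apply, Matrix.single_apply,
      add_mul, Finset.sum_add_distrib, apply_ite C]
  have hr : linSubst (transvection j i (1 : K)) (monomial r 1) = monomial r 1 := by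
    rw [linSubst_monomial, monomial_eq, C_1, one_mul, Finsupp.prod_fintype _ _ fun _ => pow_zero _]
    refine Finset.prod_congr rfl fun k _ => ?_
    obtain rfl | hk := eq_or_ne k j
    · rw [hrj, pow_zero, pow_zero]
    · rw [linForm_row_of_ne hk]
  rw [← mul_one (1 : K), ← monomial_mul, map_mul, mul_one, hr, ← X_pow_eq_monomial, map_pow,
    linSubst_X, linForm_row_same]

/-- The exponent obtained from `r` by distributing the degree `s` over `x_i` and `x_j`, with
exponent `m` for `x_j`; the truncated subtraction is meant for `m ≤ s` only. -/
def slideExp (r : Fin n →₀ ℕ) (i j : Fin n) (s m : ℕ) : Fin n →₀ ℕ :=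
  r + Finsupp.single i (s - m) + Finsupp.single j m

theorem exists_eq_slideExp (hij : i ≠ j) (e : Fin n →₀ ℕ) :
    ∃ r, r j = 0 ∧ e = slideExp r i j (e i + e j) (e j) := by
  refine ⟨(e.erase i).erase j, Finsupp.erase_same, ?_⟩
  have hej : (e.erase i) j = e j := Finsupp.erase_ne hij.symm
  rw [slideExp, Nat.add_sub_cancel, add_right_comm, ← hej, add_comm (Finsupp.erase j _),
    Finsupp.single_add_erase, Finsupp.erase_add_single]

theorem degree_slideExp (r : Fin n →₀ ℕ) {s m : ℕ} (hm : m ≤ s) :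
    (slideExp r i j s m).degree = r.degree + s := by
  rw [slideExp, map_add, map_add, Finsupp.degree_single, Finsupp.degree_single, add_assoc,
    Nat.sub_add_cancel hm]

theorem prod_pow_slideExp {μ : Fin n → K} (hμ : μ i = μ j) (r : Fin n →₀ ℕ) {s m : ℕ}
    (hm : m ≤ s) : ∏ k, μ k ^ slideExp r i j s m k = (∏ k, μ k ^ r k) * μ j ^ s := by
  simp only [slideExp, Finsupp.add_apply, pow_add, Finset.prod_mul_distrib, Finsupp.single_apply,
    pow_ite, pow_zero, Finset.prod_ite_eq, Finset.mem_univ, if_true]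
  rw [hμ, mul_assoc, ← pow_add, Nat.sub_add_cancel hm]

theorem linSubst_jordanMatrix_monomial (hij : i ≠ j) {μ : Fin n → K} (hμ : μ i = μ j)
    {r : Fin n →₀ ℕ} (hrj : r j = 0) {s b : ℕ} (hb : b ≤ s) :
    linSubst (jordanMatrix μ i j) (monomial (slideExp r i j s b) 1) =
      ((∏ k, μ k ^ r k) * μ j ^ s) • ∑ m ∈ Finset.range (b + 1),
        (b.choose m : K) • monomial (slideExp r i j s m) 1 := by
  have hrij : (r + Finsupp.single i (s - b)) j = 0 := by simp [hrj, hij]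
  rw [jordanMatrix, linSubst_mul, linSubst_diagonal_monomial, prod_pow_slideExp hμ r hb, map_smul,
    slideExp, linSubst_transvection_monomial hrij, add_pow, Finset.mul_sum]
  congr 1
  refine Finset.sum_congr rfl fun m hm => ?_
  have hsub : s - m = s - b + (b - m) := by have := Finset.mem_range.mp hm; omega
  rw [slideExp, hsub, Finsupp.single_add, ← add_assoc, smul_eq_C_mul, map_natCast]
  simp only [monomial_add_single]
  ring

theorem monExp_of_symPow_jordanMatrix_mulVec_eq_smul [CharZero K] (hij : i ≠ j) {μ : Fin n → K}
    (hμ : μ i = μ j) (hμ0 : ∀ k, μ k ≠ 0) {ν : K} {w : MonIdx n d → K}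
    (hw : symPow d (jordanMatrix μ i j) *ᵥ w = ν • w) {σ : MonIdx n d} (hσ : w σ ≠ 0) :
    monExp σ i = 0 ∧ ∏ k, μ k ^ monExp σ k = ν := by
  set φ : MvPolynomial (Fin n) K →ₗ[K] K := (dotProductEquiv K (MonIdx n d) w).comp (formCoeffs d)
    with hφ
  have φ_monExp (τ : MonIdx n d) : φ (monomial (monExp τ) 1) = w τ := by
    simp [hφ, formCoeffs_apply, dotProduct, coeff_monomial, monExp_injective.eq_iff]
  have φ_linSubst (τ : MonIdx n d) :
      φ (linSubst (jordanMatrix μ i j) (monomial (monExp τ) 1)) = ν * w τ := by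
    rw [hφ, LinearMap.comp_apply, ← symPow_apply, dotProductEquiv_apply_apply, dotProduct_comm]
    exact congrFun hw τ
  set s := monExp σ i + monExp σ j with hs
  obtain ⟨r, hrj, hσr⟩ := exists_eq_slideExp hij (monExp σ)
  have hrec (b : ℕ) (hb : b ≤ s) :
      ((∏ k, μ k ^ r k) * μ j ^ s) * ∑ m ∈ Finset.range (b + 1), (b.choose m : K) *
        φ (monomial (slideExp r i j s m) 1) = ν * φ (monomial (slideExp r i j s b) 1) := by
    obtain ⟨τ, hτ⟩ : ∃ τ : MonIdx n d, monExp τ = slideExp r i j s b := exists_monExp_eq <| by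
      rw [degree_slideExp r hb, ← degree_slideExp r (Nat.le_add_left _ _), ← hσr, degree_monExp]
    have h := φ_linSubst τ
    rw [← φ_monExp, hτ, linSubst_jordanMatrix_monomial hij hμ hrj hb, map_smul, map_sum] at h
    simpa only [map_smul, smul_eq_mul] using h
  obtain ⟨hν, hσj⟩ := eq_of_binomial_recurrence
    (mul_ne_zero (Finset.prod_ne_zero_iff.mpr fun k _ => pow_ne_zero _ (hμ0 k))
      (pow_ne_zero _ (hμ0 j))) hrec (Nat.le_add_left _ _) (by rwa [hs, ← hσr, φ_monExp])
  exact ⟨by omega, by rw [hν, hσr, prod_pow_slideExp hμ r (Nat.le_add_left _ _)]⟩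

theorem exists_multiplicatively_independent (R : Type*) [CommSemiring R] [CharZero R] (n : ℕ) :
    ∃ t : Fin n → R, (∀ k, t k ≠ 0) ∧
      ∀ e e' : Fin n →₀ ℕ, ∏ k, t k ^ e k = ∏ k, t k ^ e' k → e = e' := by
  refine ⟨fun k => (Nat.nth Nat.Prime k : R),
    fun k => Nat.cast_ne_zero.mpr (Nat.prime_nth_prime k).ne_zero, fun e e' h => ?_⟩
  have hnat : ∏ k : Fin n, Nat.nth Nat.Prime k ^ e k = ∏ k : Fin n, Nat.nth Nat.Prime k ^ e' k := by
    beta_reduce at h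
    exact_mod_cast h
  have factorization_prod (f : Fin n →₀ ℕ) (k : Fin n) :
      (∏ l : Fin n, Nat.nth Nat.Prime l ^ f l).factorization (Nat.nth Nat.Prime k) = f k := by
    rw [Nat.factorization_prod fun (l : Fin n) _ => pow_ne_zero _ (Nat.prime_nth_prime l).ne_zero,
      Finsupp.finsetSum_apply, Finset.sum_eq_single k]
    · simp [(Nat.prime_nth_prime k).factorization_pow]
    · intro l _ hl
      rw [(Nat.prime_nth_prime l).factorization_pow, Finsupp.single_eq_of_ne]
      exact fun h => hl (Fin.ext (Nat.nth_injective Nat.infinite_setOfPred_prime h.symm))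
    · simp
  ext k
  rw [← factorization_prod e k, hnat, factorization_prod]

theorem exists_not_hasSimpleSpectrum_isNonderogatory_symPow (K : Type*) [Field K] [CharZero K]
    (n : ℕ) [Nontrivial (Fin n)] : ∃ J : Matrix (Fin n) (Fin n) K,
      ¬ HasSimpleSpectrum J ∧ ∀ d, IsNonderogatory (symPow d J) := by
  obtain ⟨i, j, hij⟩ := exists_pair_ne (Fin n)
  obtain ⟨t, ht0, ht⟩ := exists_multiplicatively_independent K n
  set μ := Function.update t i (t j) with hμ
  have hμij : μ i = μ j := by simp [hμ, hij.symm]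
  have hμ0 (k : Fin n) : μ k ≠ 0 := by
    obtain rfl | hk := eq_or_ne k i <;> simp [*]
  have prod_eq (e : Fin n →₀ ℕ) (he : e i = 0) : ∏ k, μ k ^ e k = ∏ k, t k ^ e k :=
    Finset.prod_congr rfl fun k _ => by
      obtain rfl | hk := eq_or_ne k i <;> simp [*]
  refine ⟨jordanMatrix μ i j, (isJordanPair_jordanMatrix hij hμij).not_hasSimpleSpectrum,
    fun d => isNonderogatory_of_support_subset
      (fun ν => {σ | monExp σ i = 0 ∧ ∏ k, μ k ^ monExp σ k = ν}) (fun ν σ hσ τ hτ => ?_)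
      fun ν w hw σ hσ => monExp_of_symPow_jordanMatrix_mulVec_eq_smul hij hμij hμ0 hw hσ⟩
  refine monExp_injective (ht _ _ ?_)
  rw [← prod_eq _ hσ.1, ← prod_eq _ hτ.1, hσ.2, hτ.2]

end TestMatrix

/-! # Irreducible factors of the discriminant -/

section Discriminant

open Matrix MvPolynomial

theorem eval_eq_zero_of_dvd {R σ : Type*} [CommSemiring R] {p q : MvPolynomial σ R} {x : σ → R}
    (hqp : q ∣ p) (hx : eval x q = 0) : eval x p = 0 :=
  zero_dvd_iff.mp (hx ▸ map_dvd (eval x) hqp)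

variable {K : Type*} [Field K]

theorem dvd_of_forall_eval_eq_zero [IsAlgClosed K] {σ : Type*} [Finite σ] {p q : MvPolynomial σ K}
    (hq : Irreducible q) (h : ∀ x, eval x q = 0 → eval x p = 0) : q ∣ p := by
  have : (Ideal.span {q}).IsPrime := (Ideal.span_singleton_prime hq.ne_zero).mpr hq.prime
  rw [← Ideal.mem_span_singleton, ← IsPrime.vanishingIdeal_zeroLocus (K := K) (Ideal.span {q}),
    mem_vanishingIdeal_iff]
  intro x hx
  have hqx := mem_zeroLocus_iff.mp hx q (Ideal.mem_span_singleton_self q)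
  rw [aeval_eq_eval] at hqx ⊢
  exact h x hqx

/- The polynomials vanishing on the image of `F` form a prime ideal, which contains `p` and hence a
prime element `r`; then `r` and `q` are associated, because `q ∣ r` by the Nullstellensatz. -/
theorem eval_eq_zero_of_irreducible_dvd_of_parametrization [IsAlgClosed K] {σ κ : Type*} [Finite σ]
    {p : MvPolynomial σ K} (hp : p ≠ 0) (F : σ → MvPolynomial κ K)
    (hF : ∀ x, eval x p = 0 ↔ ∃ y, (fun i => eval y (F i)) = x) {q : MvPolynomial σ K}
    (hq : Irreducible q) (hqp : q ∣ p) {x : σ → K} (hx : eval x p = 0) : eval x q = 0 := by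
  have mem_ker_iff (g : MvPolynomial σ K) :
      g ∈ RingHom.ker (aeval F) ↔ ∀ y, eval (fun i => eval y (F i)) g = 0 := by
    have eval_aeval (y : κ → K) : eval y (aeval F g) = eval (fun i => eval y (F i)) g := by
      simpa using DFunLike.congr_fun (comp_aeval F (aeval y)) g
    refine ⟨fun h y => ?_, fun h => MvPolynomial.funext fun y => ?_⟩
    · rw [← eval_aeval, h, map_zero]
    · rw [eval_aeval, h, map_zero]
  have hker : p ∈ RingHom.ker (aeval F) := (mem_ker_iff p).mpr fun y => (hF _).mpr ⟨y, rfl⟩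
  obtain ⟨r, hr, hr_prime⟩ := (RingHom.ker_isPrime (aeval F : _ →ₐ[K] _)).exists_mem_prime_of_ne_bot
    fun h => hp ((Submodule.mem_bot _).mp (h ▸ hker))
  have r_vanishes {z : σ → K} (hz : eval z p = 0) : eval z r = 0 := by
    obtain ⟨y, rfl⟩ := (hF z).mp hz
    exact (mem_ker_iff r).mp hr y
  have hqr : q ∣ r := dvd_of_forall_eval_eq_zero hq fun z hz =>
    r_vanishes (eval_eq_zero_of_dvd hqp hz)
  have hrq : r ∣ q := (hq.associated_of_dvd hr_prime.irreducible hqr).symm.dvd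
  exact eval_eq_zero_of_dvd hrq (r_vanishes hx)

theorem exists_linearEquiv_apply_eq {V κ : Type*} [AddCommGroup V] [Module K V] [Finite κ]
    {u u' : κ → V} (hu : LinearIndependent K u) (hu' : LinearIndependent K u') :
    ∃ g : V ≃ₗ[K] V, ∀ k, g (u k) = u' k := by
  have : FiniteDimensional K (Submodule.span K (Set.range u)) :=
    FiniteDimensional.span_of_finite K (Set.finite_range u)
  obtain ⟨g, hg⟩ := Submodule.exists_linearEquiv_restrict_eq
    (hu.linearCombinationEquiv.symm ≪≫ₗ hu'.linearCombinationEquiv)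
  refine ⟨g, fun k => ?_⟩
  have hk : hu.linearCombinationEquiv (Finsupp.single k 1) = u k := by simp
  rw [← hk, ← hg]
  simp

variable {ι : Type*} [Fintype ι] [DecidableEq ι] {i j : ι}

theorem IsJordanPair.exists_conj {M : Matrix ι ι K} {l a : K} {v w v' w' : ι → K}
    (h : IsJordanPair M l a v w) (h' : LinearIndependent K ![v', w']) :
    ∃ P : (Matrix ι ι K)ˣ, IsJordanPair (P⁻¹.val * M * P.val) l a v' w' := by
  obtain ⟨g, hg⟩ := exists_linearEquiv_apply_eq h' h.linearIndependent
  let P : (Matrix ι ι K)ˣ := Units.map LinearMap.toMatrixAlgEquiv'.toMulEquiv.toMonoidHom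
    ((LinearMap.GeneralLinearGroup.generalLinearEquiv K (ι → K)).symm g)
  have P_mulVec (x : ι → K) : P.val *ᵥ x = g x := LinearMap.toMatrix'_mulVec _ _
  have inv_mulVec (x : ι → K) : P⁻¹.val *ᵥ g x = x := by
    rw [← P_mulVec, mulVec_mulVec, P.inv_mul, one_mulVec]
  have hv : g v' = v := hg 0
  have hw : g w' = w := hg 1
  refine ⟨P, h', ?_, ?_⟩
  · rw [← mulVec_mulVec, ← mulVec_mulVec, P_mulVec, hv, h.mulVec_left, mulVec_smul, ← hv,
      inv_mulVec]
  · rw [← mulVec_mulVec, ← mulVec_mulVec, P_mulVec, hw, h.mulVec_right, mulVec_add, mulVec_smul,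
      mulVec_smul, ← hv, ← hw, inv_mulVec, inv_mulVec]

/-- Replaces the columns `i` and `j` of `T` so that the basis vectors `e_i` and `e_j` become a
Jordan pair; it is linear in `T` and fixes the matrices for which they already are one. -/
def jordanShape {R : Type*} [CommRing R] (i j : ι) (T : Matrix ι ι R) : Matrix ι ι R :=
  (T.updateCol i (T i i • Pi.single i 1)).updateCol j
    (T i i • Pi.single j 1 + T i j • Pi.single i 1)

omit [Fintype ι] in
theorem jordanShape_map {R S : Type*} [CommRing R] [CommRing S] (φ : R →+* S) (T : Matrix ι ι R) :
    (jordanShape i j T).map φ = jordanShape i j (T.map φ) := by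
  ext a b
  simp [jordanShape, updateCol_apply, Pi.single_apply, apply_ite φ]

omit [Fintype ι] in
theorem jordanShape_smul {R : Type*} [CommRing R] (c : R) (T : Matrix ι ι R) :
    jordanShape i j (c • T) = c • jordanShape i j T := by
  ext a b
  simp only [jordanShape, updateCol_apply, Matrix.smul_apply, Pi.smul_apply, Pi.add_apply,
    smul_eq_mul]
  split_ifs <;> ring

theorem isJordanPair_jordanShape (hij : i ≠ j) (T : Matrix ι ι K) :
    IsJordanPair (jordanShape i j T) (T i i) (T i j) (Pi.single i 1) (Pi.single j 1) := by
  refine ⟨linearIndependent_pair_single hij, ?_, ?_⟩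
  · ext a
    simp [jordanShape, hij]
  · ext a
    simp [jordanShape]

theorem IsJordanPair.jordanShape_eq {T : Matrix ι ι K} {l a : K} (hij : i ≠ j)
    (h : IsJordanPair T l a (Pi.single i 1) (Pi.single j 1)) : jordanShape i j T = T := by
  have hi := h.mulVec_left
  have hj := h.mulVec_right
  rw [mulVec_single_one] at hi hj
  have hii : T i i = l := by simpa using congrFun hi i
  have hij' : T i j = a := by simpa [hij] using congrFun hj i
  have col_eq (k : ι) : T.updateCol k (T.col k) = T := updateCol_eq_self T k
  rw [jordanShape, hii, hij', ← hi, ← hj, col_eq, col_eq]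

theorem not_hasSimpleSpectrum_iff_exists_jordanShape (hij : i ≠ j) {M : Matrix ι ι K} :
    ¬ HasSimpleSpectrum M ↔
      ∃ G T : Matrix ι ι K, G * jordanShape i j T * adjugate G = M := by
  constructor
  · intro h
    obtain ⟨l, a, v, w, hvw⟩ := exists_isJordanPair_of_not_hasSimpleSpectrum h
    obtain ⟨P, hP⟩ := hvw.exists_conj (linearIndependent_pair_single hij)
    refine ⟨P.val, (P.val.det)⁻¹ • (P⁻¹.val * M * P.val), ?_⟩
    have hadj : P.val.det⁻¹ • adjugate P.val = P⁻¹.val := by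
      rw [coe_units_inv, inv_def, Ring.inverse_eq_inv]
    rw [jordanShape_smul, hP.jordanShape_eq hij, Matrix.mul_smul, Matrix.smul_mul,
      ← Matrix.mul_smul, hadj]
    simp [Matrix.mul_assoc]
  · rintro ⟨G, T, rfl⟩
    have hcharpoly : (G * jordanShape i j T * adjugate G).charpoly =
        (G.det • jordanShape i j T).charpoly := by
      rw [charpoly_mul_comm, ← Matrix.mul_assoc, adjugate_mul, Matrix.smul_mul, Matrix.one_mul]
    rw [HasSimpleSpectrum, hcharpoly]
    exact ((isJordanPair_jordanShape hij T).smul _).not_hasSimpleSpectrum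

/-- The generic matrix with a multiple eigenvalue. The left summand of the variables holds the
entries of the conjugating matrix `G`, the right one those of the matrix of Jordan shape; the
adjugate replaces the inverse of `G`, which is not polynomial. -/
def genMultipleSpectrum (R : Type*) [CommRing R] (i j : ι) :
    Matrix ι ι (MvPolynomial ((ι × ι) ⊕ (ι × ι)) R) :=
  let G := Matrix.of fun a b => X (Sum.inl (a, b))
  G * jordanShape i j (Matrix.of fun a b => X (Sum.inr (a, b))) * adjugate G

theorem not_hasSimpleSpectrum_iff_exists_map_eval (hij : i ≠ j) {M : Matrix ι ι K} :
    ¬ HasSimpleSpectrum M ↔ ∃ y, (genMultipleSpectrum K i j).map (eval y) = M := by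
  have map_eval (y : (ι × ι) ⊕ (ι × ι) → K) :
      (genMultipleSpectrum K i j).map (eval y) =
        (Matrix.of fun a b => y (Sum.inl (a, b))) *
          jordanShape i j (Matrix.of fun a b => y (Sum.inr (a, b))) *
            adjugate (Matrix.of fun a b => y (Sum.inl (a, b))) := by
    have map_X (s : ι × ι → (ι × ι) ⊕ (ι × ι)) :
        (Matrix.of fun a b => (X (s (a, b)) : MvPolynomial _ K)).map (eval y) =
          Matrix.of fun a b => y (s (a, b)) := by
      ext; simp
    rw [genMultipleSpectrum, Matrix.map_mul, Matrix.map_mul, jordanShape_map, map_X, map_X,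
      ← RingHom.mapMatrix_apply, RingHom.map_adjugate, RingHom.mapMatrix_apply, map_X]
  simp only [not_hasSimpleSpectrum_iff_exists_jordanShape hij, map_eval]
  constructor
  · rintro ⟨G, T, h⟩
    exact ⟨Sum.elim (fun e => G e.1 e.2) fun e => T e.1 e.2, h⟩
  · rintro ⟨y, h⟩
    exact ⟨_, _, h⟩

/-- The zeros of `p` are the parameters `x` for which `M x` has a multiple eigenvalue, as for the
discriminant of the characteristic polynomial of `M x`. -/
def CutsOutMultipleSpectrum {σ : Type*} (M : (σ → K) → Matrix ι ι K) (p : MvPolynomial σ K) :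
    Prop :=
  ∀ x, eval x p = 0 ↔ ¬ HasSimpleSpectrum (M x)

theorem CutsOutMultipleSpectrum.eval_eq_zero_of_irreducible_dvd [IsAlgClosed K]
    {p q : MvPolynomial (ι × ι) K}
    (hp : CutsOutMultipleSpectrum (fun x => Matrix.of fun a b => x (a, b)) p)
    (hq : Irreducible q) (hqp : q ∣ p) {x : ι × ι → K} (hx : eval x p = 0) : eval x q = 0 := by
  rcases subsingleton_or_nontrivial ι with _ | _
  · exact absurd (HasSimpleSpectrum.of_subsingleton _) ((hp x).mp hx)
  obtain ⟨i, j, hij⟩ := exists_pair_ne ι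
  have hp0 : p ≠ 0 := by
    rintro rfl
    let D : ι ↪ K := (Fintype.equivFin ι).toEmbedding.trans
      (Fin.valEmbedding.trans (Infinite.natEmbedding K))
    exact (hp fun e => diagonal D e.1 e.2).mp (map_zero _)
      (hasSimpleSpectrum_diagonal.mpr D.injective)
  refine eval_eq_zero_of_irreducible_dvd_of_parametrization hp0
    (fun e => genMultipleSpectrum K i j e.1 e.2) (fun z => ?_) hq hqp hx
  rw [hp, not_hasSimpleSpectrum_iff_exists_map_eval hij]
  refine exists_congr fun y => ⟨fun h => ?_, fun h => ?_⟩
  · exact funext fun e => congrFun₂ h e.1 e.2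
  · exact Matrix.ext fun a b => congrFun h (a, b)

end Discriminant

/-! # Generic Kalman determinants -/

theorem zOpen_setOf_eval_ne_zero {ι : Type*} (p : MvPolynomial ι ℂ) :
    zOpen {x | MvPolynomial.eval x p ≠ 0} :=
  TopologicalSpace.isOpen_generateFrom_of_mem ⟨p, rfl⟩

theorem isTopologicalBasis_zTop (ι : Type*) :
    @TopologicalSpace.IsTopologicalBasis _ (zTop ι)
      {U | ∃ p : MvPolynomial ι ℂ, U = {x | MvPolynomial.eval x p ≠ 0}} := by
  let _ := zTop ι
  refine ⟨?_, Set.eq_univ_of_forall fun x => ⟨_, ⟨1, rfl⟩, by simp⟩, rfl⟩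
  rintro _ ⟨p, rfl⟩ _ ⟨r, rfl⟩ x hx
  exact ⟨_, ⟨p * r, rfl⟩, by simpa using hx, fun y hy => by simpa using hy⟩

theorem zDense_setOf_eval_ne_zero {ι : Type*} {p : MvPolynomial ι ℂ} (hp : p ≠ 0) :
    zDense {x | MvPolynomial.eval x p ≠ 0} := by
  let _ := zTop ι
  refine (isTopologicalBasis_zTop ι).dense_iff.mpr ?_
  rintro _ ⟨r, rfl⟩ ⟨x, hx⟩
  have hr : r ≠ 0 := by
    rintro rfl
    exact hx (map_zero _)
  obtain ⟨y, hy⟩ : ∃ y, MvPolynomial.eval y (r * p) ≠ 0 := by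
    by_contra! h
    exact mul_ne_zero hr hp (MvPolynomial.funext fun y => by rw [h, map_zero])
  rw [map_mul] at hy
  exact ⟨y, left_ne_zero_of_mul hy, right_ne_zero_of_mul hy⟩

section KalmanDet

open MvPolynomial

variable {n d : ℕ}

theorem eval_kalmanDet (c : MonIdx n d → ℂ) (x : MatSpace n) :
    eval x (kalmanDet d c) = (kalmanMatrix (symPow d (toMat x)) c).det := by
  have hK : kalmanSq d c = kalmanMatrix (symPow d (genMat n)) (C ∘ c) := rfl
  have hgen : (genMat n).map (eval x) = toMat x := by
    ext
    simp [genMat, toMat]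
  have hC : eval x ∘ C ∘ c = c := by
    ext
    simp
  rw [kalmanDet, hK, RingHom.map_det, RingHom.mapMatrix_apply, kalmanMatrix_map, symPow_map, hgen,
    hC]

variable {Δ Δd q : MvPolynomial (Fin n × Fin n) ℂ}

theorem exists_isNonderogatory_symPow_eval_eq_zero (hΔ : CutsOutMultipleSpectrum toMat Δ) :
    ∃ x : MatSpace n, (∀ d, IsNonderogatory (symPow d (toMat x))) ∧
      ∀ q, Irreducible q → q ∣ Δ → eval x q = 0 := by
  rcases subsingleton_or_nontrivial (Fin n) with _ | _
  · have (d : ℕ) : Subsingleton (MonIdx n d) := inferInstance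
    refine ⟨0, fun d => (HasSimpleSpectrum.of_subsingleton _).isNonderogatory,
      fun q hq hqΔ => absurd ?_ hq.not_isUnit⟩
    refine isUnit_of_dvd_one (dvd_of_forall_eval_eq_zero hq fun x hx => ?_)
    have hΔx : eval x Δ = 0 := eval_eq_zero_of_dvd hqΔ hx
    exact absurd (HasSimpleSpectrum.of_subsingleton _) ((hΔ x).mp hΔx)
  · obtain ⟨J, hJ, hJ'⟩ := exists_not_hasSimpleSpectrum_isNonderogatory_symPow ℂ n
    exact ⟨fun e => J e.1 e.2, hJ', fun q hq hqΔ =>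
      hΔ.eval_eq_zero_of_irreducible_dvd hq hqΔ ((hΔ _).mpr hJ)⟩

theorem dvd_discriminant_symPow (hd : 0 < d) (hΔ : CutsOutMultipleSpectrum toMat Δ)
    (hΔd : CutsOutMultipleSpectrum (fun x => symPow d (toMat x)) Δd) (hq : Irreducible q)
    (hqΔ : q ∣ Δ) : q ∣ Δd := by
  refine dvd_of_forall_eval_eq_zero hq fun x hx => (hΔd x).mpr fun hsimple => ?_
  have hΔx : eval x Δ = 0 := eval_eq_zero_of_dvd hqΔ hx
  exact (hΔ x).mp hΔx (hsimple.of_symPow hd)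

theorem dvd_kalmanDet_or_dvd_discriminant (hΔ : CutsOutMultipleSpectrum toMat Δ)
    (hΔd : CutsOutMultipleSpectrum (fun x => symPow d (toMat x)) Δd) (hq : Irreducible q)
    (hqΔd : q ∣ Δd) (c : MonIdx n d → ℂ) : q ∣ kalmanDet d c ∨ q ∣ Δ := by
  refine hq.prime.dvd_or_dvd (dvd_of_forall_eval_eq_zero hq fun x hx => ?_)
  have hΔdx : eval x Δd = 0 := eval_eq_zero_of_dvd hqΔd hx
  rw [map_mul, mul_eq_zero, or_iff_not_imp_right, hΔ, not_not, eval_kalmanDet]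
  intro hsimple
  by_contra hdet
  exact (hΔd x).mp hΔdx ((hsimple.isDiagonalizable.symPow d).hasSimpleSpectrum
    (isNonderogatory_of_det_kalmanMatrix_ne_zero hdet))

theorem exists_ne_zero_eval_kalmanDet_ne_zero (hn : 0 < n) {x : MatSpace n}
    (hx : IsNonderogatory (symPow d (toMat x))) :
    ∃ c : MonIdx n d → ℂ, c ≠ 0 ∧ eval x (kalmanDet d c) ≠ 0 := by
  have : Nonempty (MonIdx n d) := ⟨Sym.replicate d ⟨0, hn⟩⟩
  obtain ⟨c, hc⟩ := hx.exists_det_kalmanMatrix_ne_zero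
  refine ⟨c, ?_, by rwa [eval_kalmanDet]⟩
  rintro rfl
  refine hc (Matrix.det_eq_zero_of_row_eq_zero (Classical.arbitrary (MonIdx n d)) fun τ => ?_)
  simp [kalmanMatrix]

theorem forall_dvd_kalmanDet_iff (hn : 0 < n) (hΔ : CutsOutMultipleSpectrum toMat Δ)
    (hΔd : CutsOutMultipleSpectrum (fun x => symPow d (toMat x)) Δd) (hq : Irreducible q) :
    (∀ c : MonIdx n d → ℂ, c ≠ 0 → q ∣ kalmanDet d c) ↔ q ∣ Δd ∧ ¬ q ∣ Δ := by
  constructor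
  · intro h
    have not_isNonderogatory {x : MatSpace n} (hx : eval x q = 0) :
        ¬ IsNonderogatory (symPow d (toMat x)) := fun hnd => by
      obtain ⟨c, hc, hdet⟩ := exists_ne_zero_eval_kalmanDet_ne_zero hn hnd
      exact hdet (eval_eq_zero_of_dvd (h c hc) hx)
    refine ⟨dvd_of_forall_eval_eq_zero hq fun x hx => (hΔd x).mpr fun hsimple =>
      not_isNonderogatory hx hsimple.isNonderogatory, fun hqΔ => ?_⟩
    obtain ⟨x, hx, hxq⟩ := exists_isNonderogatory_symPow_eval_eq_zero hΔ
    exact not_isNonderogatory (hxq q hq hqΔ) (hx d)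
  · rintro ⟨hqΔd, hqΔ⟩ c -
    exact (dvd_kalmanDet_or_dvd_discriminant hΔ hΔd hq hqΔd c).resolve_right hqΔ

theorem exists_zOpen_zDense_not_dvd_kalmanDet (d : ℕ) (hΔ : CutsOutMultipleSpectrum toMat Δ) :
    ∃ U : Set (MonIdx n d → ℂ), zOpen U ∧ zDense U ∧
      ∀ c ∈ U, ∀ q, Irreducible q → q ∣ Δ → ¬ q ∣ kalmanDet d c := by
  obtain ⟨x, hx, hxq⟩ := exists_isNonderogatory_symPow_eval_eq_zero hΔ
  let p : MvPolynomial (MonIdx n d) ℂ := (kalmanMatrix ((symPow d (toMat x)).map C) X).det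
  have eval_p (c : MonIdx n d → ℂ) : eval c p = eval x (kalmanDet d c) := by
    have hX : eval c ∘ X = c := by
      ext
      simp
    have hC : ((symPow d (toMat x)).map C).map (eval c) = symPow d (toMat x) := by
      ext
      simp
    rw [eval_kalmanDet, RingHom.map_det, RingHom.mapMatrix_apply, kalmanMatrix_map, hX, hC]
  have hp : p ≠ 0 := by
    obtain ⟨c, hc⟩ := (hx d).exists_det_kalmanMatrix_ne_zero
    rw [← eval_kalmanDet, ← eval_p] at hc
    intro h
    exact hc (h ▸ map_zero _)
  refine ⟨_, zOpen_setOf_eval_ne_zero p, zDense_setOf_eval_ne_zero hp, fun c hc q hq hqΔ hqK => ?_⟩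
  rw [Set.mem_ofPred_eq, eval_p] at hc
  exact hc (eval_eq_zero_of_dvd hqK (hxq q hq hqΔ))

end KalmanDet

/-- For sufficiently generic `f ∈ ℂ[x]_d`: every irreducible factor of
`Δ_d` is a factor of `det K_d(f)` or of `Δ`, and in this way one obtains exactly the
irreducible factors of `det K_d(f)` that do not depend on `f`; moreover the irreducible
factors of `Δ` divide `Δ_d` but do not divide `det K_d(f)`. -/
theorem kalman_det_factors_from_discriminant (n d : ℕ) (hn : 0 < n) (hd : 0 < d)
    (Δ Δd : MvPolynomial (Fin n × Fin n) ℂ)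
    (hΔ : ∀ B : Matrix (Fin n) (Fin n) ℂ,
      MvPolynomial.eval (fun ij => B ij.1 ij.2) Δ = pairProdSq B.charpoly.roots)
    (hΔd : ∀ B : Matrix (Fin n) (Fin n) ℂ,
      MvPolynomial.eval (fun ij => B ij.1 ij.2) Δd = pairProdSq (symPow d B).charpoly.roots) :
    ∃ U : Set (MonIdx n d → ℂ), zOpen U ∧ zDense U ∧ ∀ c ∈ U,
      (∀ q : MvPolynomial (Fin n × Fin n) ℂ, Irreducible q → q ∣ Δd →
        q ∣ kalmanDet d c ∨ q ∣ Δ) ∧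
      (∀ q : MvPolynomial (Fin n × Fin n) ℂ, Irreducible q →
        ((∀ c' : MonIdx n d → ℂ, c' ≠ 0 → q ∣ kalmanDet d c') ↔ (q ∣ Δd ∧ ¬ q ∣ Δ))) ∧
      (∀ q : MvPolynomial (Fin n × Fin n) ℂ, Irreducible q → q ∣ Δ →
        q ∣ Δd ∧ ¬ q ∣ kalmanDet d c) := by
  have hΔ' : CutsOutMultipleSpectrum toMat Δ := fun x => by
    rw [HasSimpleSpectrum, ← pairProdSq_eq_zero_iff, ← hΔ]
    rfl
  have hΔd' : CutsOutMultipleSpectrum (fun x => symPow d (toMat x)) Δd := fun x => by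
    rw [HasSimpleSpectrum, ← pairProdSq_eq_zero_iff, ← hΔd]
    rfl
  obtain ⟨U, hU_open, hU_dense, hU⟩ := exists_zOpen_zDense_not_dvd_kalmanDet d hΔ'
  refine ⟨U, hU_open, hU_dense, fun c hc => ⟨?_, ?_, ?_⟩⟩
  · exact fun q hq hqΔd => dvd_kalmanDet_or_dvd_discriminant hΔ' hΔd' hq hqΔd c
  · exact fun q hq => forall_dvd_kalmanDet_iff hn hΔ' hΔd' hq
  · exact fun q hq hqΔ => ⟨dvd_discriminant_symPow hd hΔ' hΔd' hq hqΔ, hU c hc q hq hqΔ⟩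

end
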